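/- There exists a constant Λ > 0 such that for every integer N ≥ 2 there exist unit vectors x_1,…,x_N in ℝ³ with x_i ≠ ±x_j for i ≠ j (i.e., N distinct points of RP²) satisfying E^P_log(x_1,…,x_N) ≤ (1 − log 2)·N² − (1/2)·N·log N + (c_⋄ − (1/2)·log 2)·N + Λ·√N·log N. -/

import Mathlib

/-!
The points are placed in the open upper hemisphere, on parallels that carry an odd number `r` of
equally spaced points each. If `n` points lie below a parallel of `r` points, its height is
`z = (n + r / 2) / N`, the centre of the strip `[n / N, (n + r) / N]`, which contains the fraction
`r / N` of the area of the hemisphere.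

Interaction of two parallels. For points at heights `z > w`, the chordal projective distance is a
product of two distances in the complex plane (`sqrt_one_sub_inner`). Hence, as a function of the
rotation of the higher point, the kernel is harmonic in the unit disc, and its mean is
`Fp z + Gp w` with `Fp z = -log ((1 + z) / 2)` and `Gp w = -log (1 - w²) / 2` (`Ker_rotation`).
Adding the parallels from the equator upwards, each can be rotated so that its interaction with
those below is at most this mean (`exists_rotation`, `exists_config`).

Interaction within a parallel. The distances to the other points multiply as for roots of unity.
For odd `r` the distances to the antipodes multiply, up to scaling, to
`(1 + z) ^ r + (1 - z) ^ r ≥ (1 + z) ^ r` (`prod_add_pow`, `ring_energy`).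

So the energy is at most a sum over parallels of
`ringCost = r (2 N z Fp z + 2 N (1 - z) Gp z - log r + log (1 - z²) / 2)`.
By the midpoint rule (`ringCost_le`) the first two terms give the increment over the strip of
`N² Ψ`, where `Ψ 0 = 0` and `Ψ 1 = 1 - log 2`, plus the error `r³ / (12 N (1 - z²))` up to a factor
close to `1`. For `r² ≈ 6 N (1 - z²)` this error and the last two terms add up to about
`r (1 / 2 - log (6 N) / 2)` (`ringCost_good`). Only `O(√N)` points, near the equator and near the
pole, cannot be put on such parallels. They are placed on parallels with a single point and cost
`O(√N log N)` (`exists_stack`, `error_le`). The resulting coefficient of `N` is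
`1 / 2 - log 6 / 2`, up to `10⁻⁵`, and a numerical estimate (`cdiamond_lower`) shows that
this does not exceed `c_⋄ - log 2 / 2`.
-/

open scoped Real RealInnerProductSpace Classical

noncomputable section

/-- Points of `ℝ³` (unit vectors represent points of `RP²`). -/
abbrev Esp := EuclideanSpace ℝ (Fin 3)

/-- Projective logarithmic energy of `x₁,…,x_N`:
`-∑_{i ≠ j} log √(1 - ⟨x_i, x_j⟩²)` over ordered pairs of distinct indices. -/
def EPlog {N : ℕ} (x : Fin N → Esp) : ℝ :=
  -∑ i, ∑ j, if i = j then 0 else Real.log (Real.sqrt (1 - ⟪x i, x j⟫^2))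

/-- The constant `c_⋄` of the quasioptimal Diamond ensemble. -/
def cdiamond : ℝ :=
  (19120 * Real.log 239 - 2270 * Real.log 227 - 1460 * Real.log 73
    - 265 * Real.log 53 - 1935 * Real.log 43 - 930 * Real.log 31
    - 1710 * Real.log 19 - 1938 * Real.log 17 + 19825 * Real.log 13
    + 1750 * Real.log 7 - 4250 * Real.log 5 - 131307 * Real.log 3
    + 56586 * Real.log 2 - 7170) / 14340

/-! ### Logarithm estimates and the value of `c_⋄` -/

lemma log_one_add_le {x : ℝ} (hx : 0 ≤ x) : Real.log (1 + x) ≤ x - x ^ 2 / 2 + x ^ 3 / 3 := by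
  have h : MonotoneOn (fun x : ℝ => x - x ^ 2 / 2 + x ^ 3 / 3 - Real.log (1 + x)) (Set.Ici 0) := by
    have hd : ∀ y : ℝ, 0 ≤ y → HasDerivAt
        (fun x : ℝ => x - x ^ 2 / 2 + x ^ 3 / 3 - Real.log (1 + x)) (y ^ 3 / (1 + y)) y := by
      intro y hy
      have h1 : (1 + y) ≠ 0 := by positivity
      have := ((((hasDerivAt_id y).sub (((hasDerivAt_id y).pow 2).div_const 2)).add
        (((hasDerivAt_id y).pow 3).div_const 3))).sub (((hasDerivAt_id y).const_add 1).log h1)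
      refine this.congr_deriv ?_
      simp only [id, Nat.cast_ofNat]
      field_simp
      ring
    apply monotoneOn_of_deriv_nonneg (convex_Ici 0)
    · exact fun y hy => (hd y hy).continuousAt.continuousWithinAt
    · intro y hy
      rw [interior_Ici] at hy
      exact (hd y hy.le).differentiableAt.differentiableWithinAt
    · intro y hy
      rw [interior_Ici] at hy
      have : 0 < y := hy
      rw [(hd y hy.le).deriv]
      positivity
  have := h (Set.self_mem_Ici) hx hx
  simp at this
  linarith

lemma log_one_sub_le {x : ℝ} (hx : 0 ≤ x) (hx1 : x < 1) :
    Real.log (1 - x) ≤ -x - x ^ 2 / 2 - x ^ 3 / 3 := by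
  have h := sum_le_hasSum (Finset.range 3) (fun n _ => by positivity)
    (Real.hasSum_pow_div_log_of_abs_lt_one (abs_lt.2 ⟨by linarith, hx1⟩))
  norm_num [Finset.sum_range_succ] at h
  linarith

/-- Two-sided bounds for `log (p / q)` when `p / q` is close to `1`; with smooth `p` and `q` they
express logarithms of larger primes through those of smaller ones. -/
lemma log_quot_bounds {p q : ℝ} (hq : 0 < q) (hqp : q ≤ p) :
    2 * (p - q) / (p + q) ≤ Real.log p - Real.log q ∧
      Real.log p - Real.log q ≤ (p / q - 1) - (p / q - 1) ^ 2 / 2 + (p / q - 1) ^ 3 / 3 := by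
  have hp : 0 < p := hq.trans_le hqp
  have hx : 0 ≤ p / q - 1 := by rw [sub_nonneg, le_div_iff₀ hq]; linarith
  have e : Real.log (1 + (p / q - 1)) = Real.log p - Real.log q := by
    rw [← Real.log_div hp.ne' hq.ne']; congr 1; ring
  refine ⟨?_, e ▸ log_one_add_le hx⟩
  rw [← e]
  refine le_trans (le_of_eq ?_) (Real.le_log_one_add_of_nonneg hx)
  rw [show p / q - 1 + 2 = (p + q) / q by field_simp; ring]
  field_simp

/-- The constant `c_⋄ ≈ -0.04922` exceeds the limiting constant `1 / 2 - log 3 / 2 ≈ -0.04931`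
of the stacked parallels with optimal sizes. The margin `10⁻⁵` absorbs the error allowed in
`ringCost_good`. -/
lemma cdiamond_lower : 1 / 2 - 1 / 2 * Real.log 3 + 1 / 10 ^ 5 ≤ cdiamond := by
  have h2 := Real.log_two_gt_d9
  have h2' := Real.log_two_lt_d9
  have h3 := Real.log_three_gt_d9
  have h3' := Real.log_three_lt_d9
  have h5 := Real.log_five_gt_d9
  have h5' := Real.log_five_lt_d9
  have lm : ∀ x y : ℝ, 0 < x → 0 < y → Real.log (x * y) = Real.log x + Real.log y :=
    fun x y hx hy => Real.log_mul hx.ne' hy.ne'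
  have lp : ∀ (x : ℝ) (n : ℕ), Real.log (x ^ n) = n * Real.log x := fun x n => Real.log_pow x n
  -- each of these quotients of smooth numbers is close to `1`
  have h7 := log_quot_bounds (p := 7 ^ 2) (q := 2 ^ 4 * 3) (by norm_num) (by norm_num)
  have h13 := log_quot_bounds (p := 13 ^ 2) (q := 2 ^ 3 * 3 * 7) (by norm_num) (by norm_num)
  have h17 := log_quot_bounds (p := 17 ^ 2) (q := 2 ^ 5 * 3 ^ 2) (by norm_num) (by norm_num)
  have h19 := log_quot_bounds (p := 19 ^ 2) (q := 2 ^ 3 * 3 ^ 2 * 5) (by norm_num) (by norm_num)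
  have h31 := log_quot_bounds (p := 31 ^ 2) (q := 2 ^ 6 * 3 * 5) (by norm_num) (by norm_num)
  have h43 := log_quot_bounds (p := 43 * 7) (q := 2 ^ 2 * 3 * 5 ^ 2) (by norm_num) (by norm_num)
  have h53 := log_quot_bounds (p := 2 ^ 5 * 5) (q := 3 * 53) (by norm_num) (by norm_num)
  have h73 := log_quot_bounds (p := 5 * 73) (q := 2 ^ 2 * 7 * 13) (by norm_num) (by norm_num)
  have h227 := log_quot_bounds (p := 3 * 227) (q := 2 ^ 3 * 5 * 17) (by norm_num) (by norm_num)
  have h239 := log_quot_bounds (p := 239 ^ 2) (q := 2 ^ 5 * 3 * 5 * 7 * 17) (by norm_num)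
    (by norm_num)
  simp (disch := norm_num) only [lm, lp] at h7 h13 h17 h19 h31 h43 h53 h73 h227 h239
  norm_num at h7 h13 h17 h19 h31 h43 h53 h73 h227 h239
  unfold cdiamond
  rw [le_div_iff₀ (by norm_num)]
  linarith [h7.1, h7.2, h13.1, h13.2, h17.1, h17.2, h19.1, h19.2, h31.1, h31.2, h43.1, h43.2,
    h53.1, h53.2, h73.1, h73.2, h227.1, h227.2, h239.1, h239.2]

/-! ### Midpoint rule for `u log u` -/

/-- An antiderivative of `u ↦ u log u`. -/
def Qf (u : ℝ) : ℝ := u * (u * Real.log u) / 2 - u ^ 2 / 4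

lemma continuous_Qf : Continuous Qf := by
  unfold Qf
  have := Real.continuous_mul_log
  fun_prop

lemma hasDerivAt_Qf {u : ℝ} (hu : u ≠ 0) : HasDerivAt Qf (u * Real.log u) u := by
  have := ((((hasDerivAt_id u).mul ((hasDerivAt_id u).mul (Real.hasDerivAt_log hu))).div_const
    2).sub (((hasDerivAt_id u).pow 2).div_const 4))
  refine this.congr_deriv ?_
  simp only [id, Nat.cast_ofNat, Pi.mul_apply]
  field_simp
  ring

lemma entropy_sum_le {x : ℝ} (hx : 0 ≤ x) (hx1 : x < 1) :
    (1 + x) * Real.log (1 + x) + (1 - x) * Real.log (1 - x) ≤ x ^ 2 + 2 / 3 * x ^ 4 := by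
  have h1 := mul_le_mul_of_nonneg_left (log_one_add_le hx) (by linarith : 0 ≤ 1 + x)
  have h2 := mul_le_mul_of_nonneg_left (log_one_sub_le hx hx1) (by linarith : 0 ≤ 1 - x)
  nlinarith

lemma Qf_diff_le_one {x : ℝ} (hx : 0 ≤ x) (hx1 : x ≤ 1) :
    Qf (1 + x) - Qf (1 - x) ≤ x ^ 3 / 3 + 2 / 15 * x ^ 5 := by
  have h : MonotoneOn (fun x : ℝ => x ^ 3 / 3 + 2 / 15 * x ^ 5 - (Qf (1 + x) - Qf (1 - x)))
      (Set.Icc 0 1) := by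
    have hd : ∀ y : ℝ, 0 < y → y < 1 → HasDerivAt
        (fun x : ℝ => x ^ 3 / 3 + 2 / 15 * x ^ 5 - (Qf (1 + x) - Qf (1 - x)))
        (y ^ 2 + 2 / 3 * y ^ 4 - ((1 + y) * Real.log (1 + y) + (1 - y) * Real.log (1 - y))) y := by
      intro y hy hy1
      have e1 := (hasDerivAt_Qf (u := 1 + y) (by linarith)).comp y
        ((hasDerivAt_id y).const_add 1)
      have e2 := (hasDerivAt_Qf (u := 1 - y) (by linarith)).comp y
        ((hasDerivAt_id y).const_sub 1)
      have := (((((hasDerivAt_id y).pow 3).div_const 3)).add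
        (((hasDerivAt_id y).pow 5).const_mul (2 / 15))).sub (e1.sub e2)
      refine this.congr_deriv ?_
      simp only [id, Nat.cast_ofNat]
      ring
    apply monotoneOn_of_deriv_nonneg (convex_Icc 0 1)
    · have := continuous_Qf
      fun_prop
    · intro y hy
      rw [interior_Icc] at hy
      exact (hd y hy.1 hy.2).differentiableAt.differentiableWithinAt
    · intro y hy
      rw [interior_Icc] at hy
      rw [(hd y hy.1 hy.2).deriv]
      linarith [entropy_sum_le hy.1.le hy.2]
  have := h (Set.left_mem_Icc.2 zero_le_one) ⟨hx, hx1⟩ hx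
  simp at this
  linarith

/-- Error of the midpoint rule for `u log u` on `[c - δ, c + δ]`. -/
lemma Qf_midpoint {c δ : ℝ} (hδ : 0 ≤ δ) (hc : 0 < c) (h : δ ≤ c) :
    Qf (c + δ) - Qf (c - δ) ≤
      2 * δ * (c * Real.log c) + δ ^ 3 / (3 * c) * (1 + 2 / 5 * (δ / c) ^ 2) := by
  obtain ⟨x, rfl⟩ : ∃ x, δ = c * x := ⟨δ / c, by field_simp⟩
  have hx : 0 ≤ x := nonneg_of_mul_nonneg_right hδ hc
  have hx1 : x ≤ 1 := by
    by_contra hh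
    nlinarith
  have scale : ∀ u : ℝ, 0 ≤ u → Qf (c * u) = c ^ 2 * Qf u + c ^ 2 * Real.log c * u ^ 2 / 2 := by
    intro u hu
    rcases hu.eq_or_lt with rfl | hu
    · simp [Qf]
    · unfold Qf
      rw [Real.log_mul hc.ne' hu.ne']
      ring
  have e1 : c + c * x = c * (1 + x) := by ring
  have e2 : c - c * x = c * (1 - x) := by ring
  rw [e1, e2, scale _ (by linarith), scale _ (by linarith)]
  have := mul_le_mul_of_nonneg_left (Qf_diff_le_one hx hx1) (sq_nonneg c)
  have e3 : (c * x) ^ 3 / (3 * c) * (1 + 2 / 5 * (c * x / c) ^ 2)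
      = c ^ 2 * (x ^ 3 / 3 + 2 / 15 * x ^ 5) := by
    field_simp
    ring
  rw [e3]
  nlinarith

/-- `Ψ(y)` is the integral over `[0, y]` of the density
`2 z log 2 - (1 + z) log (1 + z) - (1 - z) log (1 - z)`. -/
def Psi (y : ℝ) : ℝ := y ^ 2 * Real.log 2 - Qf (1 + y) + Qf (1 - y)

lemma Psi_zero : Psi 0 = 0 := by simp [Psi]

lemma Psi_one : Psi 1 = 1 - Real.log 2 := by
  norm_num [Psi, Qf]
  ring

/-! ### Cost of one parallel -/

/-- Averaged potential contribution of the higher of two parallels. -/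
def Fp (z : ℝ) : ℝ := -Real.log ((1 + z) / 2)

/-- Averaged potential contribution of the lower of two parallels. -/
def Gp (z : ℝ) : ℝ := -(Real.log (1 - z ^ 2) / 2)

/-- Height of a parallel of `r` points lying above `n` points, for `N` points in total: the
strip around it that contains the fraction `r / N` of the hemisphere is centred at this height. -/
def hgt (N n r : ℝ) : ℝ := (n + r / 2) / N

/-- Cost of a parallel of `r` points lying above `n` points, for `N` points in total. -/
def ringCost (N n r : ℝ) : ℝ :=
  r * (2 * N * hgt N n r * Fp (hgt N n r) + 2 * N * (1 - hgt N n r) * Gp (hgt N n r)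
    - Real.log r + Real.log (1 - hgt N n r ^ 2) / 2)

lemma hgt_bounds {N n r : ℝ} (hn : 0 ≤ n) (hr : 0 < r) (h : n + r ≤ N) :
    0 < hgt N n r ∧ hgt N n r < 1 := by
  have hN : 0 < N := by linarith
  unfold hgt
  refine ⟨by positivity, ?_⟩
  rw [div_lt_one hN]
  linarith

/-- The midpoint rule turns the leading part of the cost of a parallel into an integral of the
limiting density over its strip. Both midpoint errors, at `1 + z` and at `1 - z`, are controlled
by the relative width at `1 - z`. -/
lemma ringCost_le {N n r : ℝ} (hn : 0 ≤ n) (hr : 0 < r) (h : n + r ≤ N) :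
    ringCost N n r ≤ N ^ 2 * (Psi ((n + r) / N) - Psi (n / N))
      + r * (r ^ 2 / (12 * N * (1 - hgt N n r ^ 2)) * (1 + 2 / 5 * (r / (2 * N - 2 * n - r)) ^ 2)
        - Real.log r + Real.log (1 - hgt N n r ^ 2) / 2) := by
  have hN : 0 < N := by linarith
  obtain ⟨hz0, hz1⟩ := hgt_bounds hn hr h
  set z := hgt N n r with hz
  set δ := r / (2 * N) with hδ
  have hδ0 : 0 < δ := by positivity
  have ez : N * z = n + r / 2 := by rw [hz, hgt]; field_simp
  have eδ : N * δ = r / 2 := by rw [hδ]; field_simp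
  have e1 : (n + r) / N = z + δ := by
    rw [div_eq_iff hN.ne']; linarith
  have e2 : n / N = z - δ := by
    rw [div_eq_iff hN.ne']; linarith
  have hδc : δ ≤ 1 - z := by
    have : N * δ ≤ N * (1 - z) := by linarith
    exact le_of_mul_le_mul_left this hN
  have m1 := Qf_midpoint hδ0.le (by linarith : 0 < 1 + z) (by linarith)
  have m2 := Qf_midpoint hδ0.le (by linarith : 0 < 1 - z) hδc
  have ex : r / (2 * N - 2 * n - r) = δ / (1 - z) := by
    have : 2 * N - 2 * n - r = 2 * N * (1 - z) := by linarith
    rw [this, hδ, div_div]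
  rw [e1, e2, ex]
  have hz2 : 0 < 1 - z ^ 2 := by nlinarith
  have p1 : δ ^ 3 / (3 * (1 + z)) * (1 + 2 / 5 * (δ / (1 + z)) ^ 2)
      ≤ δ ^ 3 / (3 * (1 + z)) * (1 + 2 / 5 * (δ / (1 - z)) ^ 2) := by
    have : δ / (1 + z) ≤ δ / (1 - z) := by
      apply div_le_div_of_nonneg_left <;> linarith
    have h0 : 0 ≤ δ / (1 + z) := by positivity
    gcongr
  have key : N ^ 2 * (δ ^ 3 / (3 * (1 + z)) + δ ^ 3 / (3 * (1 - z)))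
      = r * (r ^ 2 / (12 * N * (1 - z ^ 2))) := by
    have h1 : 1 + z ≠ 0 := by linarith
    have h2 : 1 - z ≠ 0 := by linarith
    have h3 : 1 - z ^ 2 = (1 - z) * (1 + z) := by ring
    rw [h3, hδ]
    field_simp
    ring
  have lF : Fp z = Real.log 2 - Real.log (1 + z) := by
    rw [Fp, Real.log_div (by linarith) (by norm_num)]; ring
  have lG : Gp z = -((Real.log (1 + z) + Real.log (1 - z)) / 2) := by
    rw [Gp, ← Real.log_mul (by linarith) (by linarith)]; congr 3; ring
  have main : Psi (z + δ) - Psi (z - δ) + (δ ^ 3 / (3 * (1 + z)) + δ ^ 3 / (3 * (1 - z)))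
      * (1 + 2 / 5 * (δ / (1 - z)) ^ 2) ≥ 2 * δ * (2 * z * Fp z + 2 * (1 - z) * Gp z) := by
    unfold Psi
    rw [lF, lG]
    rw [show 1 + (z + δ) = 1 + z + δ by ring, show 1 + (z - δ) = 1 + z - δ by ring,
      show 1 - (z + δ) = 1 - z - δ by ring, show 1 - (z - δ) = 1 - z + δ by ring]
    linarith
  have main' := mul_le_mul_of_nonneg_left main (sq_nonneg N)
  have er : r * (2 * N * z * Fp z + 2 * N * (1 - z) * Gp z)
      = N ^ 2 * (2 * δ * (2 * z * Fp z + 2 * (1 - z) * Gp z)) := by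
    have : r = 2 * (N * δ) := by linarith
    rw [this]; ring
  unfold ringCost
  rw [← hz]
  have fin : r * (r ^ 2 / (12 * N * (1 - z ^ 2)) * (1 + 2 / 5 * (δ / (1 - z)) ^ 2))
    = N ^ 2 * ((δ ^ 3 / (3 * (1 + z)) + δ ^ 3 / (3 * (1 - z)))
      * (1 + 2 / 5 * (δ / (1 - z)) ^ 2)) := by
    rw [← mul_assoc, ← mul_assoc, key]
  linarith

/-! ### Choice of the parallels -/

/-- Total cost of a stack of parallels; the head of the list is the top parallel. -/
def cost (N : ℝ) : List ℕ → ℝ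
  | [] => 0
  | r :: L => ringCost N (L.sum : ℝ) r + cost N L

/-- A single point costs at most a constant beyond the integral over its strip. -/
lemma ringCost_one {N n : ℝ} (hn : 0 ≤ n) (h : n + 1 ≤ N) :
    ringCost N n 1 ≤ N ^ 2 * (Psi ((n + 1) / N) - Psi (n / N)) + 1 / 2 := by
  have hN : 0 < N := by linarith
  refine (ringCost_le hn one_pos h).trans ?_
  obtain ⟨hz0, hz1⟩ := hgt_bounds hn one_pos h
  have ez : N * hgt N n 1 = n + 1 / 2 := by rw [hgt]; field_simp
  set z := hgt N n 1
  have hw : 1 / 2 ≤ N * (1 - z ^ 2) := by nlinarith [mul_nonneg hN.le hz0.le]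
  have hlog : Real.log (1 - z ^ 2) ≤ 0 := Real.log_nonpos (by nlinarith) (by nlinarith)
  have h1 : (1:ℝ) ^ 2 / (12 * N * (1 - z ^ 2)) ≤ 1 / 6 := by
    rw [div_le_div_iff₀ (by nlinarith) (by norm_num)]
    nlinarith
  have h2 : (1 / (2 * N - 2 * n - 1)) ^ 2 ≤ 1 := by
    rw [sq_le_one_iff₀ (by apply div_nonneg <;> linarith), div_le_one (by linarith)]
    linarith
  have h3 : (1:ℝ) ^ 2 / (12 * N * (1 - z ^ 2)) * (1 + 2 / 5 * (1 / (2 * N - 2 * n - 1)) ^ 2)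
      ≤ 1 / 6 * (1 + 2 / 5 * 1) := by gcongr
  rw [Real.log_one]
  linarith

/-- A parallel whose number of points is within `2` of the optimal value
`√(6 N (1 - y²))`, where `y` is the height of the upper edge of its strip, has nearly
optimal cost. -/
lemma ringCost_good {N n r T : ℝ} (hn : 0 ≤ n) (hr : 0 < r) (hA : n + r + 10 ^ 12 ≤ N)
    (hT0 : 0 ≤ T) (hT : T ^ 2 * N = 6 * (N - (n + r)) * (N + (n + r)))
    (h1 : T - 2 ≤ r) (h2 : r ≤ T) :
    ringCost N n r ≤ N ^ 2 * (Psi ((n + r) / N) - Psi (n / N))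
      + r * (1 / 2 - Real.log (6 * N) / 2 + 1 / 10 ^ 5) := by
  have hN : 0 < N := by linarith
  refine (ringCost_le hn hr (by linarith)).trans ?_
  obtain ⟨hz0, hz1⟩ := hgt_bounds hn hr (by linarith : n + r ≤ N)
  have ez : N * hgt N n r = n + r / 2 := by rw [hgt]; field_simp
  set z := hgt N n r
  set w := 1 - z ^ 2 with hw
  have hw0 : 0 < w := by nlinarith
  set A := N - (n + r) with hAdef
  have hA' : 10 ^ 12 ≤ A := by linarith
  have hT1 : T ^ 2 ≤ 12 * A := by
    have : T ^ 2 * N ≤ 12 * A * N := by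
      rw [hT]
      nlinarith
    exact le_of_mul_le_mul_right this hN
  have hT2 : 6 * A ≤ T ^ 2 := by
    have : 6 * A * N ≤ T ^ 2 * N := by
      rw [hT]
      nlinarith [mul_nonneg (by linarith : 0 ≤ A) (by linarith : 0 ≤ n + r)]
    exact le_of_mul_le_mul_right this hN
  have hTbig : 2400000 ≤ T := by
    apply le_of_sq_le_sq _ hT0
    norm_num
    linarith
  -- `U = 6 N (1 - z²)` at the centre of the strip is close to `T²`, its value at the upper edge
  have hU : N * (6 * N * w) = N * T ^ 2 + 6 * (r * (n + r) - r ^ 2 / 4) := by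
    have : N * (6 * N * w) = 6 * (N ^ 2 - (N * z) ^ 2) := by rw [hw]; ring
    rw [this, ez, mul_comm N (T ^ 2), hT, hAdef]
    ring
  have hU1 : T ^ 2 ≤ 6 * N * w := by
    have : N * T ^ 2 ≤ N * (6 * N * w) := by
      rw [hU]
      nlinarith [mul_nonneg hr.le hn, sq_nonneg r]
    exact le_of_mul_le_mul_left this hN
  have hU2 : 6 * N * w ≤ T ^ 2 + 6 * T := by
    have : N * (6 * N * w) ≤ N * (T ^ 2 + 6 * T) := by
      rw [hU]
      nlinarith [mul_le_mul h2 (by linarith : n + r ≤ N) (by linarith) hT0, sq_nonneg r]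
    exact le_of_mul_le_mul_left this hN
  set U := 6 * N * w with hUdef
  have hU0 : 0 < U := by positivity
  have b1 : r ^ 2 / (12 * N * w) ≤ 1 / 2 := by
    rw [div_le_div_iff₀ (by positivity) (by norm_num)]
    nlinarith
  have b2 : (r / (2 * N - 2 * n - r)) ^ 2 ≤ 3 / 10 ^ 12 := by
    have e : 2 * N - 2 * n - r = 2 * A + r := by rw [hAdef]; ring
    rw [e, div_pow, div_le_div_iff₀ (by positivity) (by norm_num)]
    have hrr : r ^ 2 ≤ 12 * A := by nlinarith
    have : 10 ^ 12 * r ^ 2 ≤ A * (12 * A) := by gcongr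
    have : 0 ≤ A * r := by positivity
    nlinarith [sq_nonneg r]
  have b3 : -Real.log r + Real.log w / 2 ≤ -Real.log (6 * N) / 2 + 3 / 10 ^ 6 := by
    have hl : Real.log (U / r ^ 2) ≤ U / r ^ 2 - 1 := Real.log_le_sub_one_of_pos (by positivity)
    rw [Real.log_div hU0.ne' (by positivity), Real.log_pow, hUdef,
      Real.log_mul (by positivity) hw0.ne', ← hUdef] at hl
    have : U / r ^ 2 - 1 ≤ 6 / 10 ^ 6 := by
      rw [sub_le_iff_le_add, div_le_iff₀ (by positivity)]
      have : (T - 2) ^ 2 ≤ r ^ 2 := by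
        apply pow_le_pow_left₀ <;> linarith
      nlinarith
    push_cast at hl
    linarith
  have b4 : r ^ 2 / (12 * N * w) * (1 + 2 / 5 * (r / (2 * N - 2 * n - r)) ^ 2)
      ≤ 1 / 2 * (1 + 2 / 5 * (3 / 10 ^ 12)) := by gcongr
  have b5 := mul_le_mul_of_nonneg_left (by linarith : r ^ 2 / (12 * N * w) *
    (1 + 2 / 5 * (r / (2 * N - 2 * n - r)) ^ 2) - Real.log r + Real.log w / 2
      ≤ 1 / 2 - Real.log (6 * N) / 2 + 1 / 10 ^ 5) hr.le
  linarith

/-- Below height `1 - 10¹² / N` the parallels can be chosen nearly optimally, except for the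
lowest `m ≈ √(6 N)` points, which are put on parallels consisting of a single point. -/
lemma exists_lower_stack (N m : ℕ) (hN : 1 ≤ N) (hm : (6 * N : ℝ) ≤ m ^ 2) (B : ℕ)
    (hB : B = 0 ∨ B + 10 ^ 12 ≤ N) :
    ∃ L : List ℕ, L.sum = B ∧ (∀ r ∈ L, Odd r) ∧
      cost N L ≤ (N : ℝ) ^ 2 * Psi (B / N)
        + B * (1 / 2 - Real.log (6 * N) / 2 + 1 / 10 ^ 5)
        + Real.log (6 * N) / 2 * (min B m : ℕ) := by
  induction B using Nat.strong_induction_on with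
  | _ B ih =>
  have hN1 : (1:ℝ) ≤ N := by exact_mod_cast hN
  rcases hB with rfl | hB
  · exact ⟨[], by simp, by simp, by simp [cost, Psi_zero]⟩
  rcases Nat.eq_zero_or_pos B with rfl | hB0
  · exact ⟨[], by simp, by simp, by simp [cost, Psi_zero]⟩
  have hl0 : 0 ≤ Real.log (6 * N) / 2 := by
    have := Real.log_nonneg (by linarith : (1:ℝ) ≤ 6 * N)
    linarith
  have hBN : (B : ℝ) + 10 ^ 12 ≤ N := by exact_mod_cast hB
  rcases le_or_gt B m with hBm | hBm
  · obtain ⟨n, rfl⟩ : ∃ n, B = n + 1 := ⟨B - 1, by omega⟩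
    obtain ⟨L, hL, hodd, hc⟩ := ih n (by omega) (Or.inr (by omega))
    refine ⟨1 :: L, by simp [hL, add_comm], ?_, ?_⟩
    · intro r hr
      rcases List.mem_cons.1 hr with rfl | hr
      · exact odd_one
      · exact hodd r hr
    · push_cast at hBN
      have h1 := ringCost_one (N := N) (n := n) (by positivity) (by linarith)
      rw [min_eq_left (by omega)] at hc ⊢
      simp only [cost, hL]
      push_cast
      linarith
  · set T : ℝ := √(6 * (N - B) * (N + B) / N) with hTdef
    have hT0 : 0 ≤ T := Real.sqrt_nonneg _
    have hTsq : T ^ 2 * N = 6 * (N - B) * (N + B) := by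
      rw [hTdef, Real.sq_sqrt (div_nonneg (mul_nonneg (by linarith) (by positivity))
        (by positivity))]
      field_simp
    have hTm : T ≤ m := by
      apply le_of_sq_le_sq _ (by positivity)
      refine le_trans ?_ hm
      have : T ^ 2 * N ≤ 6 * N * N := by
        rw [hTsq]
        nlinarith [sq_nonneg (B : ℝ)]
      exact le_of_mul_le_mul_right this (by linarith)
    have hT1 : 1 ≤ T := by
      apply le_of_sq_le_sq _ hT0
      have : 1 ^ 2 * (N : ℝ) ≤ T ^ 2 * N := by
        rw [hTsq]
        have : (0:ℝ) ≤ B := by positivity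
        nlinarith
      exact le_of_mul_le_mul_right this (by linarith)
    -- the largest odd number `2 k + 1 ≤ T` is the size of the next parallel
    set k := ⌊(T - 1) / 2⌋₊ with hk
    have hk1 : (k : ℝ) ≤ (T - 1) / 2 := Nat.floor_le (by linarith)
    have hk2 : (T - 1) / 2 < k + 1 := Nat.lt_floor_add_one _
    have hrm : 2 * k + 1 ≤ m := by
      have : ((2 * k + 1 : ℕ) : ℝ) ≤ m := by push_cast; linarith
      exact_mod_cast this
    obtain ⟨n, hn⟩ : ∃ n, B = n + (2 * k + 1) := ⟨B - (2 * k + 1), by omega⟩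
    obtain ⟨L, hL, hodd, hc⟩ := ih n (by omega) (Or.inr (by omega))
    refine ⟨(2 * k + 1) :: L, by simp [hL, hn, add_comm], ?_, ?_⟩
    · intro r hr
      rcases List.mem_cons.1 hr with rfl | hr
      · exact ⟨k, rfl⟩
      · exact hodd r hr
    · have hnB : (B : ℝ) = n + (2 * k + 1) := by rw [hn]; push_cast; ring
      rw [hnB] at hTsq hBN
      have h1 := ringCost_good (N := N) (n := n) (r := 2 * k + 1) (T := T) (by positivity)
        (by positivity) (by linarith) hT0 hTsq (by linarith) (by linarith)
      have hmin : ((min n m : ℕ) : ℝ) ≤ (min B m : ℕ) := by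
        exact_mod_cast min_le_min_right m (by omega)
      have h2 := mul_le_mul_of_nonneg_left hmin hl0
      simp only [cost, hL]
      rw [hnB]
      push_cast at hc h2 ⊢
      linarith

/-- Adding `j` single points on top of a stack costs at most `j / 2` beyond the integral. -/
lemma exists_extend_stack (N : ℕ) (L : List ℕ) (hodd : ∀ r ∈ L, Odd r) (j : ℕ)
    (hj : L.sum + j ≤ N) :
    ∃ L' : List ℕ, L'.sum = L.sum + j ∧ (∀ r ∈ L', Odd r) ∧
      cost N L' ≤ cost N L
        + (N : ℝ) ^ 2 * (Psi ((L.sum + j : ℕ) / N) - Psi (L.sum / N)) + j / 2 := by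
  induction j with
  | zero => exact ⟨L, by simp, hodd, by simp⟩
  | succ j ih =>
    obtain ⟨L', hs, ho, hc⟩ := ih (by omega)
    refine ⟨1 :: L', by simp [hs]; ring, ?_, ?_⟩
    · intro r hr
      rcases List.mem_cons.1 hr with rfl | hr
      · exact odd_one
      · exact ho r hr
    · have h1 := ringCost_one (N := N) (n := (L.sum + j : ℕ)) (by positivity)
        (by exact_mod_cast (by omega : L.sum + j + 1 ≤ N))
      simp only [cost, hs]
      push_cast at h1 hc ⊢
      rw [← add_assoc]
      linarith

/-- All `N` points can be distributed over odd parallels at nearly optimal cost. The `10¹²` points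
closest to the pole and the `m` lowest points, for which no good parallel is available, enter the
error term only. -/
lemma exists_stack (N m : ℕ) (hN : 1 ≤ N) (hm : (6 * N : ℝ) ≤ m ^ 2) :
    ∃ L : List ℕ, L.sum = N ∧ (∀ r ∈ L, Odd r) ∧
      cost N L ≤ (N : ℝ) ^ 2 * (1 - Real.log 2)
        + N * (1 / 2 - Real.log (6 * N) / 2 + 1 / 10 ^ 5)
        + (Real.log (6 * N) / 2 + 1) * (m + 10 ^ 12) := by
  have hN1 : (1:ℝ) ≤ N := by exact_mod_cast hN
  have hl0 : 0 ≤ Real.log (6 * N) / 2 := by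
    have := Real.log_nonneg (by linarith : (1:ℝ) ≤ 6 * N)
    linarith
  -- the numeral is hidden so that it is never unfolded in unary
  obtain ⟨K, hK⟩ : ∃ K : ℕ, K = 10 ^ 12 := ⟨_, rfl⟩
  have hK' : (10 ^ 12 : ℝ) = K := by rw [hK]; norm_num
  rw [hK']
  obtain ⟨L, hL, hodd, hc⟩ := exists_lower_stack N m hN hm (N - K) (by omega)
  obtain ⟨j, hj, hj'⟩ : ∃ j, N - K + j = N ∧ j ≤ K := ⟨N - (N - K), by omega⟩
  obtain ⟨L', hs, ho, hc'⟩ := exists_extend_stack N L hodd j (by omega)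
  refine ⟨L', by omega, ho, ?_⟩
  rw [hL, hj, div_self (by positivity), Psi_one] at hc'
  have hjN : (((N - K : ℕ)) : ℝ) = N - j := by
    rw [eq_sub_iff_add_eq]; exact_mod_cast hj
  have hjr : (j : ℝ) ≤ K := by exact_mod_cast hj'
  have hmin : ((min (N - K) m : ℕ) : ℝ) ≤ m := by exact_mod_cast min_le_right _ _
  have h2 := mul_le_mul_of_nonneg_left hmin hl0
  have h3 := mul_le_mul_of_nonneg_left hjr hl0
  have hj0 : (0:ℝ) ≤ j := by positivity
  have hm0 : (0:ℝ) ≤ m := by positivity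
  rw [hjN] at hc hc'
  linarith

/-! ### The kernel between two points -/

/-- The point of the sphere at height `z` and horizontal direction `ζ` (a complex unit). -/
def pt (q : ℝ × ℂ) : Esp := !₂[√(1 - q.1 ^ 2) * q.2.re, √(1 - q.1 ^ 2) * q.2.im, q.1]

/-- Projective logarithmic kernel. On the diagonal it takes the value `-log 0 = 0`. -/
def Ker (x y : Esp) : ℝ := -Real.log √(1 - ⟪x, y⟫ ^ 2)

lemma Ker_comm (x y : Esp) : Ker x y = Ker y x := by
  rw [Ker, Ker, real_inner_comm]

lemma inner_pt (z w : ℝ) (ζ η : ℂ) :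
    ⟪pt (z, ζ), pt (w, η)⟫ =
      √(1 - z ^ 2) * √(1 - w ^ 2) * (ζ.re * η.re + ζ.im * η.im) + z * w := by
  simp [pt, PiLp.inner_apply, Fin.sum_univ_three]
  ring

lemma re_sq_add_im_sq {ζ : ℂ} (h : ‖ζ‖ = 1) : ζ.re ^ 2 + ζ.im ^ 2 = 1 := by
  have := Complex.sq_norm ζ
  rw [h, Complex.normSq_apply] at this
  linarith

lemma norm_pt {z : ℝ} {ζ : ℂ} (hz : 0 < z) (hz1 : z < 1) (h : ‖ζ‖ = 1) : ‖pt (z, ζ)‖ = 1 := by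
  have h1 : ‖pt (z, ζ)‖ ^ 2 = 1 := by
    rw [← real_inner_self_eq_norm_sq, inner_pt, Real.mul_self_sqrt (by nlinarith)]
    have := re_sq_add_im_sq h
    linear_combination (1 - z ^ 2) * this
  nlinarith [norm_nonneg (pt (z, ζ))]

lemma normSq_comb (a b : ℝ) {ζ η : ℂ} (hζ : ‖ζ‖ = 1) (hη : ‖η‖ = 1) :
    ‖(a : ℂ) * η + b * ζ‖ ^ 2 = a ^ 2 + b ^ 2 + 2 * (a * b) * (ζ.re * η.re + ζ.im * η.im) := by
  rw [Complex.sq_norm, Complex.normSq_apply]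
  simp
  linear_combination a ^ 2 * re_sq_add_im_sq hη + b ^ 2 * re_sq_add_im_sq hζ

lemma sqrt_mul_swap {z w : ℝ} (hz : 0 < z) (hz1 : z < 1) (hw : 0 < w) (hw1 : w < 1) :
    √((1 + z) * (1 - w)) * √((1 - z) * (1 + w)) = √(1 - z ^ 2) * √(1 - w ^ 2) ∧
    √((1 + z) * (1 + w)) * √((1 - z) * (1 - w)) = √(1 - z ^ 2) * √(1 - w ^ 2) := by
  have h1 : 0 ≤ (1 + z) * (1 - w) := mul_nonneg (by linarith) (by linarith)
  have h2 : 0 ≤ (1 + z) * (1 + w) := mul_nonneg (by linarith) (by linarith)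
  have h3 : 0 ≤ 1 - z ^ 2 := by nlinarith
  rw [← Real.sqrt_mul h1, ← Real.sqrt_mul h2, ← Real.sqrt_mul h3]
  constructor <;> congr 1 <;> ring

/-- The chordal projective distance as a product of two distances in the complex plane. -/
lemma sqrt_one_sub_inner {z w : ℝ} {ζ η : ℂ} (hz : 0 < z) (hz1 : z < 1) (hw : 0 < w) (hw1 : w < 1)
    (hζ : ‖ζ‖ = 1) (hη : ‖η‖ = 1) :
    √(1 - ⟪pt (z, ζ), pt (w, η)⟫ ^ 2) =
      ‖((√((1 + z) * (1 - w)) : ℝ) : ℂ) * η - (√((1 - z) * (1 + w)) : ℝ) * ζ‖ *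
      ‖((√((1 + z) * (1 + w)) : ℝ) : ℂ) * η + (√((1 - z) * (1 - w)) : ℝ) * ζ‖ / 2 := by
  obtain ⟨e1, e2⟩ := sqrt_mul_swap hz hz1 hw hw1
  have n1 := normSq_comb (√((1 + z) * (1 - w))) (-√((1 - z) * (1 + w))) hζ hη
  have n2 := normSq_comb (√((1 + z) * (1 + w))) (√((1 - z) * (1 - w))) hζ hη
  rw [neg_sq, Real.sq_sqrt (mul_nonneg (by linarith) (by linarith)),
    Real.sq_sqrt (mul_nonneg (by linarith) (by linarith)), mul_neg, e1] at n1
  rw [Real.sq_sqrt (mul_nonneg (by linarith) (by linarith)),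
    Real.sq_sqrt (mul_nonneg (by linarith) (by linarith)), e2] at n2
  rw [Complex.ofReal_neg, neg_mul, ← sub_eq_add_neg] at n1
  rw [← Real.sqrt_sq (by positivity : 0 ≤ ‖((√((1 + z) * (1 - w)) : ℝ) : ℂ) * η -
    (√((1 - z) * (1 + w)) : ℝ) * ζ‖ * ‖((√((1 + z) * (1 + w)) : ℝ) : ℂ) * η +
    (√((1 - z) * (1 - w)) : ℝ) * ζ‖ / 2), div_pow, mul_pow, n1, n2, inner_pt]
  congr 1
  ring

lemma exists_le_circleAverage {f : ℂ → ℝ} (hf : CircleIntegrable f 0 1) :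
    ∃ ζ : ℂ, ‖ζ‖ = 1 ∧ f ζ ≤ Real.circleAverage f 0 1 := by
  have hpi : (0:ℝ) < 2 * π := by positivity
  obtain ⟨θ, -, h⟩ := MeasureTheory.exists_le_setAverage (μ := MeasureTheory.volume)
    (s := Set.Ioc 0 (2 * π)) (f := fun θ => f (circleMap 0 1 θ))
    (by simp [Real.pi_pos]) (by rw [Real.volume_Ioc]; exact ENNReal.ofReal_ne_top)
    ((intervalIntegrable_iff_integrableOn_Ioc_of_le hpi.le).1 hf)
  refine ⟨circleMap 0 1 θ, by simp [circleMap], h.trans_eq ?_⟩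
  rw [MeasureTheory.setAverage_eq, Real.circleAverage, intervalIntegral.integral_of_le hpi.le]
  simp [hpi.le]

/-- A sum of functions of the form `C - log |ζ - c| - log |ζ - d|` with poles outside the unit disc
is at some point of the circle at most its mean, which by harmonicity is the value at the centre. -/
lemma exists_rotation {ι : Type*} (s : Finset ι) (f : ι → ℂ → ℝ) (v : ι → ℝ)
    (h : ∀ i ∈ s, ∃ (C : ℝ) (c d : ℂ), 1 < ‖c‖ ∧ 1 < ‖d‖ ∧
      v i = C - Real.log ‖c‖ - Real.log ‖d‖ ∧
      ∀ ζ : ℂ, ‖ζ‖ = 1 → f i ζ = C - Real.log ‖ζ - c‖ - Real.log ‖ζ - d‖) :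
    ∃ ζ : ℂ, ‖ζ‖ = 1 ∧ ∑ i ∈ s, f i ζ ≤ ∑ i ∈ s, v i := by
  choose! C c d hc hd hv hf using h
  have hint : ∀ i ∈ s, CircleIntegrable
      (fun ζ => C i - Real.log ‖ζ - c i‖ - Real.log ‖ζ - d i‖) 0 1 := fun i _ =>
    ((circleIntegrable_const _ _ _).sub (circleIntegrable_log_norm_sub_const _)).sub
      (circleIntegrable_log_norm_sub_const _)
  obtain ⟨ζ, hζ, hle⟩ := exists_le_circleAverage (CircleIntegrable.fun_sum s hint)
  refine ⟨ζ, hζ, ?_⟩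
  rw [Real.circleAverage_fun_sum hint] at hle
  rw [Finset.sum_congr rfl (fun i hi => hf i hi ζ hζ)]
  refine hle.trans_eq (Finset.sum_congr rfl fun i hi => ?_)
  have h1 : CircleIntegrable (fun ζ => C i - Real.log ‖ζ - c i‖) 0 1 :=
    (circleIntegrable_const _ _ _).sub (circleIntegrable_log_norm_sub_const _)
  rw [Real.circleAverage_fun_sub h1 (circleIntegrable_log_norm_sub_const _),
    Real.circleAverage_fun_sub (circleIntegrable_const _ _ _)
    (circleIntegrable_log_norm_sub_const _), Real.circleAverage_const,
    circleAverage_log_norm_sub_const_eq_posLog, circleAverage_log_norm_sub_const_eq_posLog,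
    Real.posLog_eq_log, Real.posLog_eq_log, hv i hi]
  · rw [abs_of_nonneg (norm_nonneg _)]; exact (hd i hi).le
  · rw [abs_of_nonneg (norm_nonneg _)]; exact (hc i hi).le

/-- As a function of the rotation `ζ` of the higher point, the kernel between two points at
different heights is a combination of logarithmic potentials with poles outside the unit
circle, so its mean over rotations is `Fp z + Gp w`. -/
lemma Ker_rotation {z w : ℝ} {μ η : ℂ} (hw : 0 < w) (hwz : w < z) (hz1 : z < 1)
    (hμ : ‖μ‖ = 1) (hη : ‖η‖ = 1) :
    ∃ (C : ℝ) (c d : ℂ), 1 < ‖c‖ ∧ 1 < ‖d‖ ∧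
      Fp z + Gp w = C - Real.log ‖c‖ - Real.log ‖d‖ ∧
      ∀ ζ : ℂ, ‖ζ‖ = 1 →
        Ker (pt (z, ζ * μ)) (pt (w, η)) = C - Real.log ‖ζ - c‖ - Real.log ‖ζ - d‖ := by
  have hz : 0 < z := hw.trans hwz
  have hw1 : w < 1 := hwz.trans hz1
  have p1 : 0 < 1 - z := by linarith
  have p2 : 0 < 1 - w := by linarith
  set a := √((1 + z) * (1 - w)) with ha
  set b := √((1 - z) * (1 + w)) with hb
  set a' := √((1 + z) * (1 + w)) with ha'
  set b' := √((1 - z) * (1 - w)) with hb'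
  have b0 : 0 < b := Real.sqrt_pos.2 (by positivity)
  have b0' : 0 < b' := Real.sqrt_pos.2 (by positivity)
  have hab : b < a := Real.sqrt_lt_sqrt (by positivity) (by nlinarith)
  have hab' : b' < a' := Real.sqrt_lt_sqrt (by positivity) (by nlinarith)
  have a0 : 0 < a := b0.trans hab
  have a0' : 0 < a' := b0'.trans hab'
  have hμ0 : μ ≠ 0 := by
    rintro rfl
    simp at hμ
  have hbC : (b : ℂ) ≠ 0 := by exact_mod_cast b0.ne'
  have hbC' : (b' : ℂ) ≠ 0 := by exact_mod_cast b0'.ne'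
  have nc : ‖(a : ℂ) * η / (b * μ)‖ = a / b := by
    simp [hμ, hη, abs_of_pos a0, abs_of_pos b0]
  have nd : ‖-((a' : ℂ) * η / (b' * μ))‖ = a' / b' := by
    simp [hμ, hη, abs_of_pos a0', abs_of_pos b0']
  have c1 : 1 < ‖(a : ℂ) * η / (b * μ)‖ := by rw [nc, one_lt_div b0]; exact hab
  have d1 : 1 < ‖-((a' : ℂ) * η / (b' * μ))‖ := by rw [nd, one_lt_div b0']; exact hab'
  refine ⟨Real.log 2 - Real.log b - Real.log b', (a : ℂ) * η / (b * μ),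
    -((a' : ℂ) * η / (b' * μ)), c1, d1, ?_, ?_⟩
  · have la : Real.log a = (Real.log (1 + z) + Real.log (1 - w)) / 2 := by
      rw [ha, Real.log_sqrt (by positivity), Real.log_mul (by positivity) p2.ne']
    have la' : Real.log a' = (Real.log (1 + z) + Real.log (1 + w)) / 2 := by
      rw [ha', Real.log_sqrt (by positivity), Real.log_mul (by positivity) (by positivity)]
    rw [nc, nd, Real.log_div a0.ne' b0.ne', Real.log_div a0'.ne' b0'.ne', la, la', Fp, Gp,
      Real.log_div (by positivity) (by norm_num),
      show 1 - w ^ 2 = (1 - w) * (1 + w) by ring, Real.log_mul p2.ne' (by positivity)]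
    ring
  · intro ζ hζ
    have hζμ : ‖ζ * μ‖ = 1 := by rw [norm_mul, hζ, hμ, one_mul]
    have n1 : ‖(a : ℂ) * η - b * (ζ * μ)‖ = b * ‖ζ - (a : ℂ) * η / (b * μ)‖ := by
      have : (a : ℂ) * η - b * (ζ * μ) = -(b * μ) * (ζ - (a : ℂ) * η / (b * μ)) := by
        field_simp
        ring
      rw [this, norm_mul]
      simp [hμ, abs_of_pos b0]
    have n2 : ‖(a' : ℂ) * η + b' * (ζ * μ)‖ = b' * ‖ζ - -((a' : ℂ) * η / (b' * μ))‖ := by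
      have : (a' : ℂ) * η + b' * (ζ * μ) = (b' * μ) * (ζ - -((a' : ℂ) * η / (b' * μ))) := by
        field_simp
        ring
      rw [this, norm_mul]
      simp [hμ, abs_of_pos b0']
    have q1 : ‖ζ - (a : ℂ) * η / (b * μ)‖ ≠ 0 := by
      rw [norm_ne_zero_iff, sub_ne_zero]
      rintro h
      rw [← h] at c1
      linarith
    have q2 : ‖ζ - -((a' : ℂ) * η / (b' * μ))‖ ≠ 0 := by
      rw [norm_ne_zero_iff, sub_ne_zero]
      rintro h
      rw [← h] at d1
      linarith
    rw [Ker, sqrt_one_sub_inner hz hz1 hw hw1 hζμ hη, n1, n2, Real.log_div (by positivity)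
      (by norm_num), Real.log_mul (by positivity) (by positivity),
      Real.log_mul b0.ne' q1, Real.log_mul b0'.ne' q2]
    ring

/-! ### Energy within one parallel -/

/-- The kernel between two different points of one parallel. -/
lemma Ker_same_height {z : ℝ} {ζ η : ℂ} (hz : 0 < z) (hz1 : z < 1) (hζ : ‖ζ‖ = 1) (hη : ‖η‖ = 1)
    (hne : ζ ≠ η) :
    Ker (pt (z, ζ)) (pt (z, η)) =
      Gp z + Real.log 2 - Real.log ‖η - ζ‖ - Real.log ‖((1 + z : ℝ) : ℂ) * η + (1 - z : ℝ) * ζ‖ := by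
  have p1 : 0 < 1 - z := by linarith
  have e0 : 0 < 1 - z ^ 2 := by nlinarith
  have q : ‖η - ζ‖ ≠ 0 := norm_ne_zero_iff.2 (sub_ne_zero.2 hne.symm)
  have q2 : ‖((1 + z : ℝ) : ℂ) * η + (1 - z : ℝ) * ζ‖ ≠ 0 := by
    have := norm_sub_le_norm_add (((1 + z : ℝ) : ℂ) * η) ((1 - z : ℝ) * ζ)
    rw [norm_mul, norm_mul, hζ, hη, Complex.norm_real, Complex.norm_real, Real.norm_eq_abs,
      Real.norm_eq_abs, abs_of_pos p1, abs_of_pos (by linarith)] at this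
    intro h
    linarith
  rw [Ker, sqrt_one_sub_inner hz hz1 hz hz1 hζ hη, show (1 + z) * (1 - z) = 1 - z ^ 2 by ring,
    show (1 - z) * (1 + z) = 1 - z ^ 2 by ring, ← pow_two, ← pow_two, Real.sqrt_sq (by linarith),
    Real.sqrt_sq (by linarith), ← mul_sub, norm_mul, Complex.norm_real, Real.norm_eq_abs,
    abs_of_nonneg (Real.sqrt_nonneg _), Real.log_div (mul_ne_zero (mul_ne_zero
      (Real.sqrt_pos.2 e0).ne' q) q2) (by norm_num),
    Real.log_mul (mul_ne_zero (Real.sqrt_pos.2 e0).ne' q) q2,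
    Real.log_mul (Real.sqrt_pos.2 e0).ne' q, Real.log_sqrt e0.le, Gp]
  ring

lemma Ker_self {x : Esp} (h : ‖x‖ = 1) : Ker x x = 0 := by
  simp [Ker, h]

lemma Ker_rotate {z : ℝ} {ν ζ η : ℂ} (hν : ‖ν‖ = 1) :
    Ker (pt (z, ν * ζ)) (pt (z, ν * η)) = Ker (pt (z, ζ)) (pt (z, η)) := by
  have := re_sq_add_im_sq hν
  have e : ⟪pt (z, ν * ζ), pt (z, ν * η)⟫ = ⟪pt (z, ζ), pt (z, η)⟫ := by
    rw [inner_pt, inner_pt]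
    simp only [Complex.mul_re, Complex.mul_im]
    linear_combination √(1 - z ^ 2) * √(1 - z ^ 2) * (ζ.re * η.re + ζ.im * η.im) * this
  rw [Ker, Ker, e]

/-- A sum over the group of `r`-th roots of unity is invariant under multiplication by one of them. -/
lemma sum_rotate {r : ℕ} [NeZero r] {ω : ℂ} (hω : ω ^ r = 1) (i : Fin r) (g : ℂ → ℝ) :
    ∑ j : Fin r, g (ω ^ (j : ℕ)) = ∑ j : Fin r, g (ω ^ (i : ℕ) * ω ^ (j : ℕ)) := by
  refine (Equiv.sum_comp (Equiv.addLeft i) fun j : Fin r => g (ω ^ (j : ℕ))).symm.trans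
    (Finset.sum_congr rfl fun j _ => ?_)
  congr 1
  rw [Equiv.coe_addLeft, Fin.val_add, ← pow_eq_pow_mod _ hω, pow_add]

lemma prod_add_pow {r : ℕ} (hr : Odd r) {ω : ℂ} (hω : IsPrimitiveRoot ω r) (x y : ℂ) :
    ∏ k ∈ Finset.range r, (x * ω ^ k + y) = x ^ r + y ^ r := by
  have himg : (Finset.range r).image (fun k => ω ^ k) = Polynomial.nthRootsFinset r (1 : ℂ) := by
    apply Finset.eq_of_subset_of_card_le
    · intro μ hμ
      obtain ⟨k, -, rfl⟩ := Finset.mem_image.1 hμ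
      rw [Polynomial.mem_nthRootsFinset hr.pos, ← pow_mul, mul_comm, pow_mul, hω.pow_eq_one,
        one_pow]
    · rw [hω.card_nthRootsFinset, Finset.card_image_of_injOn, Finset.card_range]
      intro i hi j hj h
      exact hω.pow_inj (Finset.mem_range.1 hi) (Finset.mem_range.1 hj) h
  rw [add_comm, hω.pow_add_pow_eq_prod_add_mul y x hr, ← himg, Finset.prod_image]
  · exact Finset.prod_congr rfl fun k _ => by ring
  · intro i hi j hj h
    exact hω.pow_inj (Finset.mem_range.1 hi) (Finset.mem_range.1 hj) h

/-- Energy of one parallel with an odd number `r` of equally spaced points. Oddness makes the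
product of the distances to the antipodes at least `(1 + z) ^ r`. -/
lemma ring_energy {r : ℕ} (hr : Odd r) {ω : ℂ} (hω : IsPrimitiveRoot ω r) {z : ℝ} (hz : 0 < z)
    (hz1 : z < 1) {ξ : ℂ} (hξ : ‖ξ‖ = 1) :
    ∑ i : Fin r, ∑ j : Fin r, Ker (pt (z, ξ * ω ^ (i : ℕ))) (pt (z, ξ * ω ^ (j : ℕ))) ≤
      (r : ℝ) ^ 2 * (Fp z + Gp z) - r * Real.log r + r * (Real.log (1 - z ^ 2) / 2) := by
  have hr0 : r ≠ 0 := hr.pos.ne'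
  have : NeZero r := ⟨hr0⟩
  have hωn : ‖ω‖ = 1 := Complex.norm_eq_one_of_pow_eq_one hω.pow_eq_one hr0
  have hωk : ∀ k : ℕ, ‖ω ^ k‖ = 1 := fun k => by rw [norm_pow, hωn, one_pow]
  have hrow : ∀ i : Fin r,
      ∑ j : Fin r, Ker (pt (z, ξ * ω ^ (i : ℕ))) (pt (z, ξ * ω ^ (j : ℕ))) =
        ∑ j : Fin r, Ker (pt (z, 1)) (pt (z, ω ^ (j : ℕ))) := by
    intro i
    rw [sum_rotate hω.pow_eq_one i
      (fun μ => Ker (pt (z, ξ * ω ^ (i : ℕ))) (pt (z, ξ * μ)))]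
    refine Finset.sum_congr rfl fun j _ => ?_
    rw [Ker_rotate hξ]
    conv_lhs => rw [← mul_one (ω ^ (i : ℕ))]
    rw [mul_one, ← Ker_rotate (ζ := 1) (hωk i), mul_one]
  rw [Finset.sum_congr rfl fun i _ => hrow i, Finset.sum_const, Finset.card_univ, Fintype.card_fin,
    nsmul_eq_mul]
  obtain ⟨n, rfl⟩ : ∃ n, r = n + 1 := ⟨r - 1, by omega⟩
  rw [Fin.sum_univ_eq_sum_range (fun j => Ker (pt (z, 1)) (pt (z, ω ^ j))),
    Finset.sum_range_succ', pow_zero, Ker_self (norm_pt hz hz1 norm_one), add_zero]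
  have hne : ∀ k ∈ Finset.range n, ω ^ (k + 1) ≠ 1 := fun k hk =>
    hω.pow_ne_one_of_pos_of_lt (by omega) (by have := Finset.mem_range.1 hk; omega)
  have hterm : ∀ k ∈ Finset.range n, Ker (pt (z, 1)) (pt (z, ω ^ (k + 1))) =
      (Gp z + Real.log 2) - Real.log ‖1 - ω ^ (k + 1)‖
        - Real.log ‖((1 + z : ℝ) : ℂ) * ω ^ (k + 1) + (1 - z : ℝ)‖ := by
    intro k hk
    rw [Ker_same_height hz hz1 norm_one (hωk _) (hne k hk).symm, norm_sub_rev, mul_one]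
  have p1 : 0 < 1 - z := by linarith
  have hnz : ∀ k : ℕ, ‖((1 + z : ℝ) : ℂ) * ω ^ k + (1 - z : ℝ)‖ ≠ 0 := by
    intro k
    have := norm_sub_le_norm_add (((1 + z : ℝ) : ℂ) * ω ^ k) ((1 - z : ℝ) : ℂ)
    rw [norm_mul, hωk, Complex.norm_real, Complex.norm_real, Real.norm_eq_abs,
      Real.norm_eq_abs, abs_of_pos p1, abs_of_pos (by linarith)] at this
    intro h
    linarith
  have s1 : ∑ k ∈ Finset.range n, Real.log ‖1 - ω ^ (k + 1)‖ = Real.log (n + 1 : ℕ) := by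
    rw [← Real.log_prod fun k hk => norm_ne_zero_iff.2 (sub_ne_zero.2 (hne k hk).symm),
      ← norm_prod, hω.prod_one_sub_pow_eq_order]
    congr 1
    rw [← Nat.cast_succ, Complex.norm_natCast]
  have s2 : ((n + 1 : ℕ) : ℝ) * Real.log (1 + z) - Real.log 2 ≤
      ∑ k ∈ Finset.range n, Real.log ‖((1 + z : ℝ) : ℂ) * ω ^ (k + 1) + (1 - z : ℝ)‖ := by
    have hs := Finset.sum_range_succ'
      (fun k => Real.log ‖((1 + z : ℝ) : ℂ) * ω ^ k + (1 - z : ℝ)‖) n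
    have h0 : ‖((1 + z : ℝ) : ℂ) * ω ^ 0 + (1 - z : ℝ)‖ = 2 := by
      rw [pow_zero, mul_one, ← Complex.ofReal_add, Complex.norm_real]
      norm_num
    rw [← Real.log_prod fun k _ => hnz k, ← norm_prod, prod_add_pow hr hω, h0] at hs
    have hle : Real.log ((1 + z) ^ (n + 1)) ≤
        Real.log ‖((1 + z : ℝ) : ℂ) ^ (n + 1) + ((1 - z : ℝ) : ℂ) ^ (n + 1)‖ := by
      apply Real.log_le_log (by positivity)
      rw [← Complex.ofReal_pow, ← Complex.ofReal_pow, ← Complex.ofReal_add, Complex.norm_real,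
        Real.norm_eq_abs, abs_of_pos (by positivity)]
      have : 0 < (1 - z) ^ (n + 1) := by positivity
      linarith
    rw [Real.log_pow] at hle
    linarith
  rw [Finset.sum_congr rfl hterm, Finset.sum_sub_distrib, Finset.sum_sub_distrib, s1,
    Finset.sum_const, Finset.card_range, nsmul_eq_mul]
  have lF : Fp z = Real.log 2 - Real.log (1 + z) := by
    rw [Fp, Real.log_div (by linarith) (by norm_num)]; ring
  have lG : Real.log (1 - z ^ 2) / 2 = -Gp z := by rw [Gp]; ring
  rw [lF, lG]
  have := mul_le_mul_of_nonneg_left s2 (by positivity : (0:ℝ) ≤ (n + 1 : ℕ))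
  push_cast at this ⊢
  linarith

/-! ### Assembling the configuration -/

/-- Points stacked in parallels with sizes listed in `L` (topmost first). The term with `N - n`
accounts for the mean interaction with the points still to be placed above. -/
lemma exists_config (N : ℕ) (L : List ℕ) : ∀ n : ℕ, n = L.sum → n ≤ N → (∀ r ∈ L, Odd r) →
    ∃ p : Fin n → ℝ × ℂ, (∀ i, ‖(p i).2‖ = 1) ∧ (∀ i, 0 < (p i).1 ∧ (p i).1 < n / N) ∧
      Function.Injective p ∧
      ∑ i, ∑ j, Ker (pt (p i)) (pt (p j)) + 2 * ((N : ℝ) - n) * ∑ i, Gp (p i).1 ≤ cost N L := by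
  induction L with
  | nil =>
    intro n hn _ _
    obtain rfl : n = 0 := by simpa using hn
    exact ⟨Fin.elim0, fun i => i.elim0, fun i => i.elim0, fun i => i.elim0, by simp [cost]⟩
  | cons r L ih =>
    intro m hm hmN hodd
    obtain ⟨n, hn⟩ : ∃ n, n = L.sum := ⟨_, rfl⟩
    obtain rfl : m = r + n := by rw [hm, List.sum_cons, hn]
    obtain ⟨p, hp1, hp2, hpi, hpE⟩ := ih n hn (by omega) fun s hs => hodd s (by simp [hs])
    have hr : Odd r := hodd r (by simp)
    have hr0 : (0 : ℝ) < r := by exact_mod_cast hr.pos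
    have hN0 : (0 : ℝ) < N := by
      have := hr.pos
      exact_mod_cast (by omega : 0 < N)
    have hnN : (n : ℝ) + r ≤ N := by
      rw [add_comm]
      exact_mod_cast hmN
    obtain ⟨hz, hz1⟩ := hgt_bounds (Nat.cast_nonneg n) hr0 hnN
    set z := hgt (N : ℝ) n r with hzdef
    have hNz : (N : ℝ) * z = n + r / 2 := by
      rw [hzdef, hgt]
      field_simp
    have hlow : ∀ j, (p j).1 < z := fun j => (hp2 j).2.trans (by
      rw [hzdef, hgt]
      gcongr
      linarith)
    have hztop : z < ((r + n : ℕ) : ℝ) / N := by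
      rw [hzdef, hgt]
      push_cast
      gcongr ?_ / _
      linarith
    obtain ⟨ω, hω⟩ : ∃ ω : ℂ, IsPrimitiveRoot ω r := ⟨_, Complex.isPrimitiveRoot_exp r hr.pos.ne'⟩
    have hωk : ∀ k : ℕ, ‖ω ^ k‖ = 1 := fun k => by
      rw [norm_pow, Complex.norm_eq_one_of_pow_eq_one hω.pow_eq_one hr.pos.ne', one_pow]
    -- rotate the new parallel so that its interaction with the lower ones is at most the mean
    obtain ⟨ξ, hξ, hcross⟩ := exists_rotation (Finset.univ : Finset (Fin r × Fin n))
      (fun q ζ => Ker (pt (z, ζ * ω ^ (q.1 : ℕ))) (pt (p q.2)))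
      (fun q => Fp z + Gp (p q.2).1)
      (fun q _ => Ker_rotation (hp2 q.2).1 (hlow q.2) hz1 (hωk q.1) (hp1 q.2))
    have hξ0 : ξ ≠ 0 := by
      rintro rfl
      simp at hξ
    rw [Fintype.sum_prod_type, Fintype.sum_prod_type] at hcross
    simp only [Finset.sum_const, Finset.card_univ, Fintype.card_fin, nsmul_eq_mul,
      Finset.sum_add_distrib] at hcross
    have hring := ring_energy hr hω hz hz1 hξ
    refine ⟨Fin.append (fun i : Fin r => (z, ξ * ω ^ (i : ℕ))) p, ?_, ?_, ?_, ?_⟩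
    · refine Fin.addCases (fun i => ?_) fun i => ?_
      · rw [Fin.append_left, norm_mul, hξ, hωk, one_mul]
      · rw [Fin.append_right]
        exact hp1 i
    · refine Fin.addCases (fun i => ?_) fun i => ?_
      · rw [Fin.append_left]
        exact ⟨hz, hztop⟩
      · rw [Fin.append_right]
        exact ⟨(hp2 i).1, (hlow i).trans hztop⟩
    · rw [Fin.append_injective_iff]
      refine ⟨fun i j h => ?_, hpi, fun i j h => ?_⟩
      · exact Fin.ext (hω.pow_inj i.2 j.2 (mul_left_cancel₀ hξ0 (Prod.ext_iff.1 h).2))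
      · exact (hlow j).ne (Prod.ext_iff.1 h).1.symm
    · have hcomm : ∑ j : Fin n, ∑ i : Fin r, Ker (pt (p j)) (pt (z, ξ * ω ^ (i : ℕ))) =
          ∑ i : Fin r, ∑ j : Fin n, Ker (pt (z, ξ * ω ^ (i : ℕ))) (pt (p j)) := by
        rw [Finset.sum_comm]
        exact Finset.sum_congr rfl fun i _ => Finset.sum_congr rfl fun j _ => Ker_comm _ _
      simp only [Fin.sum_univ_add, Fin.append_left, Fin.append_right, Finset.sum_add_distrib,
        Finset.sum_const, Finset.card_univ, Fintype.card_fin, nsmul_eq_mul]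
      rw [hcomm, cost, ← hn, ringCost, ← hzdef, mul_assoc 2 (N : ℝ) z, mul_assoc 2 (N : ℝ) (1 - z),
        mul_sub (N : ℝ), hNz]
      push_cast
      linarith

lemma pt_injOn {p q : ℝ × ℂ} (hp : 0 < p.1) (hp1 : p.1 < 1) (h : pt p = pt q) : p = q := by
  have h0 := congrArg (fun v : Esp => v 0) h
  have h1 := congrArg (fun v : Esp => v 1) h
  have h2 := congrArg (fun v : Esp => v 2) h
  simp only [pt] at h0 h1 h2
  simp at h0 h1 h2
  rw [← h2] at h0 h1
  have hs : √(1 - p.1 ^ 2) ≠ 0 := (Real.sqrt_pos.2 (by nlinarith)).ne'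
  refine Prod.ext h2 (Complex.ext ?_ ?_)
  · simpa [hs] using h0
  · simpa [hs] using h1

lemma pt_ne_neg {p q : ℝ × ℂ} (hp : 0 < p.1) (hq : 0 < q.1) : pt p ≠ -pt q := by
  intro h
  have h2 := congrArg (fun v : Esp => v 2) h
  simp [pt] at h2
  linarith

/-- The diagonal may be included in the energy, since the kernel takes the junk value
`-log 0 = 0` there. -/
lemma EPlog_eq_sum {N : ℕ} {x : Fin N → Esp} (hx : ∀ i, ‖x i‖ = 1) :
    EPlog x = ∑ i, ∑ j, Ker (x i) (x j) := by
  rw [EPlog, ← Finset.sum_neg_distrib]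
  refine Finset.sum_congr rfl fun i _ => ?_
  rw [← Finset.sum_neg_distrib]
  refine Finset.sum_congr rfl fun j _ => ?_
  split_ifs with h
  · rw [h, Ker_self (hx j), neg_zero]
  · rfl

/-- The `O(√N)` points off the good parallels contribute `O(√N log N)`. -/
lemma error_le {N : ℕ} (hN : 2 ≤ N) {m : ℝ} (hm : m ≤ √(6 * N) + 1) :
    (Real.log (6 * N) / 2 + 1) * (m + 10 ^ 12) ≤ (4 * (4 + 10 ^ 12)) * √N * Real.log N := by
  have hN2 : (2 : ℝ) ≤ N := by exact_mod_cast hN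
  have l2 := Real.log_two_gt_d9
  have lN : Real.log 2 ≤ Real.log N := Real.log_le_log (by norm_num) hN2
  have l6 : Real.log 6 ≤ 3 * Real.log 2 := by
    rw [show 3 * Real.log 2 = Real.log (2 ^ 3) by rw [Real.log_pow]; norm_num]
    exact Real.log_le_log (by norm_num) (by norm_num)
  have hs1 : 1 ≤ √(N : ℝ) := Real.one_le_sqrt.2 (by linarith)
  have hs6 : √(6 * N : ℝ) ≤ 3 * √(N : ℝ) := by
    rw [Real.sqrt_mul (by norm_num)]
    gcongr
    rw [Real.sqrt_le_left (by norm_num)]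
    norm_num
  rw [Real.log_mul (by norm_num) (by positivity)]
  calc (((Real.log 6 + Real.log N) / 2 + 1) * (m + 10 ^ 12) : ℝ)
      ≤ ((Real.log 6 + Real.log N) / 2 + 1) * ((4 + 10 ^ 12) * √N) := by
        have : 0 ≤ Real.log 6 := Real.log_nonneg (by norm_num)
        apply mul_le_mul_of_nonneg_left _ (by linarith)
        linarith
    _ ≤ (4 * Real.log N) * ((4 + 10 ^ 12) * √N) := by
        apply mul_le_mul_of_nonneg_right _ (by positivity)
        linarith
    _ = _ := by ring

/-- There is a constant `Λ > 0` such that for every `N ≥ 2` there are `N` distinct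
points of `RP²` (unit vectors `x₁,…,x_N` with `x_i ≠ ±x_j` for `i ≠ j`) whose
projective logarithmic energy is at most
`(1 - log 2) N² - (1/2) N log N + (c_⋄ - (1/2) log 2) N + Λ √N log N`. -/
theorem low_energy_points_on_projective_plane :
    ∃ Λ : ℝ, 0 < Λ ∧ ∀ N : ℕ, 2 ≤ N → ∃ x : Fin N → Esp,
      (∀ i, ‖x i‖ = 1) ∧ (∀ i j, i ≠ j → x i ≠ x j ∧ x i ≠ -x j) ∧
      EPlog x ≤ (1 - Real.log 2) * (N:ℝ)^2 - (1/2) * N * Real.log N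
        + (cdiamond - (1/2) * Real.log 2) * N + Λ * Real.sqrt N * Real.log N := by
  refine ⟨4 * (4 + 10 ^ 12), by norm_num, fun N hN => ?_⟩
  have hN0 : (0 : ℝ) < N := by exact_mod_cast (by omega : 0 < N)
  have hm : (6 * N : ℝ) ≤ (⌈√(6 * N : ℝ)⌉₊ : ℝ) ^ 2 := by
    rw [← Real.sqrt_le_left (Nat.cast_nonneg _)]
    exact Nat.le_ceil _
  obtain ⟨L, hLN, hodd, hcost⟩ := exists_stack N _ (by omega) hm
  obtain ⟨p, hp1, hp2, hpi, hpE⟩ := exists_config N L N hLN.symm le_rfl hodd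
  rw [sub_self, mul_zero, zero_mul, add_zero] at hpE
  have hp3 : ∀ i, (p i).1 < 1 := fun i => by
    have := (hp2 i).2
    rwa [div_self hN0.ne'] at this
  have hx : ∀ i, ‖pt (p i)‖ = 1 := fun i => norm_pt (hp2 i).1 (hp3 i) (hp1 i)
  refine ⟨fun i => pt (p i), hx, fun i j hij => ⟨fun h => ?_, pt_ne_neg (hp2 i).1 (hp2 j).1⟩, ?_⟩
  · exact hij (hpi (pt_injOn (hp2 i).1 (hp3 i) h))
  · have herr := error_le hN (Nat.ceil_lt_add_one (Real.sqrt_nonneg (6 * N : ℝ))).le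
    have hc := mul_le_mul_of_nonneg_right cdiamond_lower hN0.le
    have l6 : Real.log (6 * N) = Real.log 2 + Real.log 3 + Real.log N := by
      rw [← Real.log_mul (by norm_num) (by norm_num), ← Real.log_mul (by norm_num) hN0.ne']
      norm_num
    rw [EPlog_eq_sum hx]
    refine hpE.trans (hcost.trans ?_)
    have hmain : (N : ℝ) * (1 / 2 - Real.log (6 * N) / 2 + 1 / 10 ^ 5) ≤
        -(1 / 2) * N * Real.log N + (cdiamond - (1 / 2) * Real.log 2) * N := by
      rw [l6]
      linarith
    linarith
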